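/- Suppose Q ⪰ I and R is positive semidefinite. Let K̂, K_* ∈ ℝ^{m×d} both satisfy ρ(A + BK̂) < 1 and ρ(A + BK_*) < 1, with corresponding Lyapunov solutions P̂ = P_{K̂,1} and P_* = P_{K_*,1}, and suppose tr(P̂) ≤ 2·tr(P_*). Then for every t ≥ 0 and every x₀ ∈ ℝ^d, the closed-loop state x_t = (A + BK̂)^t x₀ satisfies ‖x_t‖ ≤ √(2·tr(P_*)) · exp(−t / (4·tr(P_*))) · ‖x₀‖; that is, K̂ is (√(2·tr(P_*)), (4·tr(P_*))⁻¹)-exponentially stable. -/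

import Mathlib

open Matrix

/-- A real square matrix is stable if every complex eigenvalue has modulus `< 1`. -/
def IsStable {n : ℕ} (M : Matrix (Fin n) (Fin n) ℝ) : Prop :=
  ∀ μ ∈ spectrum ℂ (M.map Complex.ofReal), ‖μ‖ < 1

/-- Euclidean norm of a vector in `ℝ^n`. -/
noncomputable def evnorm {n : ℕ} (x : Fin n → ℝ) : ℝ :=
  ‖(WithLp.equiv 2 (Fin n → ℝ)).symm x‖

/-- `P_{K,1} = Σ_t ((A+BK)^t)ᵀ (Q + KᵀRK) (A+BK)^t`, the solution of the (undiscounted)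
Lyapunov equation when `A+BK` is stable. -/
noncomputable def lyapP {d m : ℕ} (A : Matrix (Fin d) (Fin d) ℝ) (B : Matrix (Fin d) (Fin m) ℝ)
    (Q : Matrix (Fin d) (Fin d) ℝ) (R : Matrix (Fin m) (Fin m) ℝ)
    (K : Matrix (Fin m) (Fin d) ℝ) : Matrix (Fin d) (Fin d) ℝ :=
  ∑' t : ℕ, ((A + B * K) ^ t)ᵀ * (Q + Kᵀ * R * K) * (A + B * K) ^ t

/-!
Write `M = A + B K̂`, `S = Q + K̂ᵀ R K̂ ⪰ I` and `P = P̂`. The Lyapunov equation `P = S + Mᵀ P M`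
makes `v(x) = xᵀ P x` decrease by at least `‖x‖²` along each step of `x ↦ M x`. On the other hand
`v(x) ≤ T ‖x‖²` for any `T ≥ tr P`, since the largest eigenvalue of a positive semidefinite matrix
is at most its trace. So each step multiplies `v` by at most `1 - 1/T ≤ exp (-1/T)`, and
`‖x‖² ≤ v(x) ≤ T ‖x‖²` turns this into decay of `‖x‖`; near-optimality allows `T = 2 tr P⋆`.
-/

section LyapunovFunction

theorem le_exp_mul_of_succ_le {v : ℕ → ℝ} {c : ℝ} (hv : ∀ t, 0 ≤ v t)
    (hstep : ∀ t, v (t + 1) ≤ (1 - c) * v t) (t : ℕ) : v t ≤ Real.exp (-(t * c)) * v 0 := by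
  have hgeom : v t ≤ Real.exp (-c) ^ t * v 0 :=
    le_geom (Real.exp_pos _).le t fun k _ =>
      (hstep k).trans (mul_le_mul_of_nonneg_right (Real.one_sub_le_exp_neg c) (hv k))
  rwa [← Real.exp_nat_mul, mul_neg] at hgeom

theorem norm_le_sqrt_mul_exp_of_lyapunov {E : Type*} [SeminormedAddGroup E] {x : ℕ → E}
    {v : ℕ → ℝ} {T : ℝ} (hv : ∀ t, 0 ≤ v t) (hvT : ∀ t, v t ≤ T * ‖x t‖ ^ 2)
    (hdec : ∀ t, v (t + 1) + ‖x t‖ ^ 2 ≤ v t) (t : ℕ) :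
    ‖x t‖ ≤ √T * Real.exp (-t / (2 * T)) * ‖x 0‖ := by
  have hlow (s : ℕ) : ‖x s‖ ^ 2 ≤ v s := by linarith [hdec s, hv (s + 1)]
  rcases le_or_gt T 0 with hT | hT
  · have hzero : ‖x t‖ ^ 2 ≤ 0 :=
      (hlow t).trans <| (hvT t).trans <| mul_nonpos_of_nonpos_of_nonneg hT (sq_nonneg _)
    rw [(pow_eq_zero_iff two_ne_zero).1 (hzero.antisymm (sq_nonneg _))]
    positivity
  have hstep (s : ℕ) : v (s + 1) ≤ (1 - T⁻¹) * v s := by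
    have : T⁻¹ * v s ≤ ‖x s‖ ^ 2 := (inv_mul_le_iff₀ hT).2 (hvT s)
    linarith [hdec s]
  refine le_of_sq_le_sq ?_ (by positivity)
  calc ‖x t‖ ^ 2 ≤ v t := hlow t
    _ ≤ Real.exp (-(t * T⁻¹)) * v 0 := le_exp_mul_of_succ_le hv hstep t
    _ ≤ Real.exp (-(t * T⁻¹)) * (T * ‖x 0‖ ^ 2) := by gcongr; exact hvT 0
    _ = (√T * Real.exp (-t / (2 * T)) * ‖x 0‖) ^ 2 := by
      have hexp : Real.exp (-t / (2 * T)) ^ 2 = Real.exp (-(t * T⁻¹)) := by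
        rw [← Real.exp_nat_mul]
        congr 1
        push_cast
        field_simp
      rw [mul_pow, mul_pow, Real.sq_sqrt hT.le, hexp]
      ring

end LyapunovFunction

section LyapunovSeries

variable {A : Type*}

/-- The sum `∑ₜ (a⋆)ᵗ s aᵗ`, which solves the discrete Lyapunov (Stein) equation `p = s + a⋆ p a`
when it converges; for real matrices `a⋆` is the transpose. It is `0` when the series diverges. -/
noncomputable def lyapunovSeries [Semiring A] [StarRing A] [TopologicalSpace A] (a s : A) : A :=
  ∑' t : ℕ, star (a ^ t) * s * a ^ t

theorem lyapunovSeries_eq_add [Ring A] [StarRing A] [TopologicalSpace A] [IsTopologicalRing A]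
    [T2Space A] {a s : A} (h : Summable fun t : ℕ => star (a ^ t) * s * a ^ t) :
    lyapunovSeries a s = s + star a * lyapunovSeries a s * a := by
  conv_lhs => rw [lyapunovSeries, h.tsum_eq_zero_add]
  rw [lyapunovSeries, ← h.tsum_mul_left, ← (h.mul_left _).tsum_mul_right]
  simp only [pow_zero, star_one, one_mul, mul_one, pow_succ, star_mul, mul_assoc]

theorem eventually_norm_pow_le_of_spectralRadius_lt [NormedRing A] [NormedAlgebra ℂ A]
    [CompleteSpace A] {a : A} {r : NNReal} (h : spectralRadius ℂ a < r) :
    ∀ᶠ t : ℕ in Filter.atTop, ‖a ^ t‖ ≤ r ^ t := by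
  have hgelfand := spectrum.pow_nnnorm_pow_one_div_tendsto_nhds_spectralRadius a
  filter_upwards [hgelfand.eventually_lt_const h, Filter.eventually_gt_atTop 0] with t hroot ht
  have hpow := ENNReal.rpow_le_rpow hroot.le (Nat.cast_nonneg (α := ℝ) t)
  rw [← ENNReal.rpow_mul, one_div_mul_cancel (by positivity), ENNReal.rpow_one,
    ENNReal.rpow_natCast] at hpow
  exact_mod_cast hpow

theorem summable_star_pow_mul_mul_pow [NormedRing A] [StarRing A] [NormedStarGroup A]
    [NormedAlgebra ℂ A] [CompleteSpace A] {a : A} (ha : spectralRadius ℂ a < 1) (s : A) :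
    Summable fun t : ℕ => star (a ^ t) * s * a ^ t := by
  obtain ⟨r, har, hr⟩ := ENNReal.lt_iff_exists_nnreal_btwn.1 ha
  have hr2 : r ^ 2 < 1 := pow_lt_one₀ zero_le (by exact_mod_cast hr) two_ne_zero
  have hgeom : Summable fun t : ℕ => ‖s‖ * ((r : ℝ) ^ 2) ^ t :=
    (summable_geometric_of_lt_one (by positivity) (by exact_mod_cast hr2)).mul_left _
  refine hgeom.of_norm_bounded_eventually_nat ?_
  filter_upwards [eventually_norm_pow_le_of_spectralRadius_lt har] with t ht
  calc ‖star (a ^ t) * s * a ^ t‖ ≤ ‖star (a ^ t)‖ * ‖s‖ * ‖a ^ t‖ := norm_mul₃_le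
    _ = ‖s‖ * ‖a ^ t‖ ^ 2 := by rw [norm_star]; ring
    _ ≤ ‖s‖ * ((r : ℝ) ^ 2) ^ t := by rw [pow_right_comm]; gcongr

end LyapunovSeries

section PosSemidef

theorem posSemidef_add_conjTranspose_mul_mul_sub_one {m n R : Type*} [Fintype m] [Finite n]
    [DecidableEq n] [Ring R] [PartialOrder R] [StarRing R] [AddLeftMono R] {Q : Matrix n n R}
    {C : Matrix m m R} (hQ : (Q - 1).PosSemidef) (hC : C.PosSemidef) (K : Matrix m n R) :
    (Q + Kᴴ * C * K - 1).PosSemidef := by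
  rw [add_sub_right_comm]
  exact hQ.add (hC.conjTranspose_mul_mul_same K)

variable {n R : Type*} [Ring R] [PartialOrder R] [StarRing R] [TopologicalSpace R]
  [IsTopologicalSemiring R] [ContinuousStar R] [OrderClosedTopology R]

theorem isClosed_setOf_posSemidef [Finite n] : IsClosed {M : Matrix n n R | M.PosSemidef} := by
  have := Fintype.ofFinite n
  simp only [posSemidef_iff_dotProduct_mulVec, Set.ofPred_and, Set.ofPred_forall, IsHermitian]
  refine (isClosed_eq (by fun_prop) continuous_id).inter (isClosed_iInter fun x => ?_)
  exact isClosed_le continuous_const (by fun_prop)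

theorem posSemidef_tsum [Finite n] [AddLeftMono R] {ι : Type*} {f : ι → Matrix n n R}
    (hf : ∀ i, (f i).PosSemidef) : (∑' i, f i).PosSemidef := by
  by_cases h : Summable f
  · exact isClosed_setOf_posSemidef.mem_of_tendsto h.hasSum
      (.of_forall fun s => posSemidef_sum s fun i _ => hf i)
  · rw [tsum_eq_zero_of_not_summable h]
    exact .zero

theorem posSemidef_lyapunovSeries [Fintype n] [AddLeftMono R] [DecidableEq n] {S : Matrix n n R}
    (hS : S.PosSemidef) (M : Matrix n n R) : (lyapunovSeries M S).PosSemidef :=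
  posSemidef_tsum fun t => hS.conjTranspose_mul_mul_same (M ^ t)

end PosSemidef

section LoewnerOrder

open scoped MatrixOrder ComplexOrder

variable {n 𝕜 : Type*} [Fintype n] [RCLike 𝕜]

theorem re_star_dotProduct_mulVec_mono {A B : Matrix n n 𝕜} (h : A ≤ B) (x : n → 𝕜) :
    RCLike.re (star x ⬝ᵥ A *ᵥ x) ≤ RCLike.re (star x ⬝ᵥ B *ᵥ x) := by
  simpa only [sub_mulVec, dotProduct_sub, map_sub, sub_nonneg] using h.re_dotProduct_nonneg x

theorem re_star_dotProduct_self (x : n → 𝕜) :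
    RCLike.re (star x ⬝ᵥ x) = ‖WithLp.toLp 2 x‖ ^ 2 := by
  rw [dotProduct_comm, ← EuclideanSpace.inner_toLp_toLp, inner_self_eq_norm_sq]

variable [DecidableEq n]

theorem le_algebraMap_of_trace_le {P : Matrix n n 𝕜} {T : ℝ} (hP : P.PosSemidef)
    (hT : RCLike.re P.trace ≤ T) : P ≤ algebraMap ℝ _ T := by
  refine le_algebraMap_of_spectrum_le (fun μ hμ => ?_) hP.1
  obtain ⟨i, rfl⟩ := hP.1.spectrum_real_eq_range_eigenvalues ▸ hμ
  calc hP.1.eigenvalues i ≤ ∑ j, hP.1.eigenvalues j :=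
        Finset.single_le_sum (fun j _ => hP.eigenvalues_nonneg j) (Finset.mem_univ i)
    _ = RCLike.re P.trace := by
      rw [hP.1.trace_eq_sum_eigenvalues, ← RCLike.ofReal_sum, RCLike.ofReal_re]
    _ ≤ T := hT

theorem norm_pow_mulVec_le_sqrt_mul_exp {M P : Matrix n n 𝕜} {T : ℝ} (hP : 0 ≤ P)
    (hPT : P ≤ algebraMap ℝ _ T) (hlyap : 1 + Mᴴ * P * M ≤ P) (t : ℕ) (x : n → 𝕜) :
    ‖WithLp.toLp 2 (M ^ t *ᵥ x)‖ ≤ √T * Real.exp (-t / (2 * T)) * ‖WithLp.toLp 2 x‖ := by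
  let traj : ℕ → n → 𝕜 := fun s => M ^ s *ᵥ x
  have htraj (s : ℕ) : traj (s + 1) = M *ᵥ traj s := by
    simp only [traj, pow_succ', mulVec_mulVec]
  suffices h : ‖WithLp.toLp 2 (traj t)‖ ≤
      √T * Real.exp (-t / (2 * T)) * ‖WithLp.toLp 2 (traj 0)‖ by
    simpa only [traj, pow_zero, one_mulVec] using h
  refine norm_le_sqrt_mul_exp_of_lyapunov (x := fun s => WithLp.toLp 2 (traj s))
    (v := fun s => RCLike.re (star (traj s) ⬝ᵥ P *ᵥ traj s)) (fun s => ?_) (fun s => ?_)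
    (fun s => ?_) t
  · exact (nonneg_iff_posSemidef.1 hP).re_dotProduct_nonneg _
  · refine (re_star_dotProduct_mulVec_mono hPT (traj s)).trans_eq ?_
    rw [Algebra.algebraMap_eq_smul_one, smul_mulVec, one_mulVec, dotProduct_smul, RCLike.smul_re,
      re_star_dotProduct_self]
  · refine le_trans (le_of_eq ?_) (re_star_dotProduct_mulVec_mono hlyap (traj s))
    rw [htraj, ← re_star_dotProduct_self, star_mulVec, ← dotProduct_mulVec, mulVec_mulVec,
      mulVec_mulVec, add_mulVec, one_mulVec, dotProduct_add, map_add, add_comm, Matrix.mul_assoc]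

end LoewnerOrder

section RealMatrices

theorem IsStable.spectralRadius_lt_one {d : ℕ} {M : Matrix (Fin d) (Fin d) ℝ} (hM : IsStable M) :
    spectralRadius ℂ (M.map Complex.ofReal) < 1 := by
  open scoped Matrix.Norms.L2Operator in
  rcases subsingleton_or_nontrivial (Matrix (Fin d) (Fin d) ℂ) with _ | _
  · rw [spectrum.SpectralRadius.of_subsingleton]
    exact zero_lt_one
  · exact_mod_cast spectrum.spectralRadius_lt_of_forall_lt_of_nonempty
      (spectrum.nonempty (M.map Complex.ofReal)) (r := 1) fun μ hμ => by exact_mod_cast hM μ hμ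

variable {n : Type*} [Fintype n] [DecidableEq n]

theorem summable_star_pow_mul_mul_pow_of_real {M : Matrix n n ℝ}
    (hM : spectralRadius ℂ (M.map Complex.ofReal) < 1) (S : Matrix n n ℝ) :
    Summable fun t : ℕ => star (M ^ t) * S * M ^ t := by
  open scoped Matrix.Norms.L2Operator in
  have hcont : Continuous (Complex.reLm.mapMatrix : Matrix n n ℂ →ₗ[ℝ] Matrix n n ℝ) :=
    continuous_id.matrix_map Complex.continuous_re
  have hmap (t : ℕ) : star (M.map Complex.ofReal ^ t) * S.map Complex.ofReal *
      M.map Complex.ofReal ^ t = (star (M ^ t) * S * M ^ t).map Complex.ofRealHom := by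
    have hstar : (M ^ t)ᴴ.map Complex.ofRealHom = ((M ^ t).map Complex.ofRealHom)ᴴ :=
      conjTranspose_map _ fun r => (Complex.conj_ofReal r).symm
    rw [star_eq_conjTranspose, star_eq_conjTranspose, Matrix.map_mul, Matrix.map_mul, hstar,
      Matrix.map_pow]
    rfl
  convert (summable_star_pow_mul_mul_pow hM (S.map Complex.ofReal)).map _ hcont with t
  rw [Function.comp_apply, hmap]
  rfl

open scoped MatrixOrder in
theorem near_optimal_implies_exp_stable_general {M S : Matrix n n ℝ} {T : ℝ}
    (hM : spectralRadius ℂ (M.map Complex.ofReal) < 1) (hS : (S - 1).PosSemidef)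
    (hT : (lyapunovSeries M S).trace ≤ T) (t : ℕ) (x : n → ℝ) :
    ‖WithLp.toLp 2 (M ^ t *ᵥ x)‖ ≤ √T * Real.exp (-t / (2 * T)) * ‖WithLp.toLp 2 x‖ := by
  have hP : (lyapunovSeries M S).PosSemidef :=
    posSemidef_lyapunovSeries (sub_add_cancel S 1 ▸ hS.add .one) M
  have hlyap : 1 + Mᴴ * lyapunovSeries M S * M ≤ lyapunovSeries M S := by
    conv_rhs => rw [lyapunovSeries_eq_add (summable_star_pow_mul_mul_pow_of_real hM S)]
    exact add_le_add_left hS _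
  exact norm_pow_mulVec_le_sqrt_mul_exp hP.nonneg (le_algebraMap_of_trace_le hP hT) hlyap t x

end RealMatrices

/-- If `Q ⪰ I`, `R ⪰ 0`, `K̂` and `K⋆` are stabilizing with value matrices `P̂, P⋆`, and
`tr P̂ ≤ 2 tr P⋆`, then `K̂` is `(√(2 tr P⋆), (4 tr P⋆)⁻¹)`-exponentially stable. -/
theorem near_optimal_implies_exp_stable {d m : ℕ}
    (A : Matrix (Fin d) (Fin d) ℝ) (B : Matrix (Fin d) (Fin m) ℝ)
    (Q : Matrix (Fin d) (Fin d) ℝ) (R : Matrix (Fin m) (Fin m) ℝ)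
    (hQ : (Q - 1).PosSemidef) (hR : R.PosSemidef)
    (Khat Kstar : Matrix (Fin m) (Fin d) ℝ)
    (hKhat : IsStable (A + B * Khat)) (hKstar : IsStable (A + B * Kstar))
    (htr : (lyapP A B Q R Khat).trace ≤ 2 * (lyapP A B Q R Kstar).trace) :
    ∀ (t : ℕ) (x0 : Fin d → ℝ),
      evnorm (((A + B * Khat) ^ t).mulVec x0)
        ≤ Real.sqrt (2 * (lyapP A B Q R Kstar).trace)
            * Real.exp (-(t : ℝ) / (4 * (lyapP A B Q R Kstar).trace)) * evnorm x0 := by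
  intro t x0
  rw [show (4 : ℝ) = 2 * 2 by norm_num, mul_assoc 2 2]
  -- `evnorm` and `lyapP` unfold to `‖WithLp.toLp 2 ·‖` and `lyapunovSeries`.
  exact near_optimal_implies_exp_stable_general hKhat.spectralRadius_lt_one
    (posSemidef_add_conjTranspose_mul_mul_sub_one hQ hR Khat) htr t x0
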